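/- For x > 0, let α(x) be the weight sequence α_0 := √x and α_n := √((n+2)/(n+3)) for n ≥ 1, with moments γ_0 := 1 and γ_m := α_0² ⋯ α_{m−1}² for m ≥ 1 (so that γ_m = 3x/(m+2) for m ≥ 1). Then for every integer k ≥ 1, the (k+1)×(k+1) real Hankel matrix whose (i,j) entry is γ_{i+j} (0 ≤ i, j ≤ k) is positive semidefinite if and only if 0 < x ≤ 2(k+1)²(k+2)² / (3k(k+3)(k²+3k+4)). -/

import Mathlib

open Finset Matrix

noncomputable section

/-- The weight sequence: `α₀ = √x`, `α_n = √((n+2)/(n+3))` for `n ≥ 1`. -/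
def alphaX (x : ℝ) : ℕ → ℝ := fun n =>
  if n = 0 then Real.sqrt x else Real.sqrt (((n : ℝ) + 2) / ((n : ℝ) + 3))

/-- The moments `γ_0 = 1`, `γ_m = α₀² ⋯ α_{m−1}²`. -/
def momentX (x : ℝ) (m : ℕ) : ℝ := ∏ j ∈ range m, (alphaX x j) ^ 2

/-!
Since `γ_m = 3x / (m + 2)` for `m ≥ 1`, only the corner entry of the Hankel matrix deviates from
`3x C`, where `C` is the Cauchy matrix with entries `1 / (a_i + a_j)` for the nodes `a_i = i + 1`.
The matrix `C` is positive semidefinite because `1 / (a + b) = ∫₀^∞ exp (-(a + b) t) dt`. By the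
Cauchy–Schwarz inequality for its form, adding `1 - 3x / 2` to the corner of `3x C` preserves
positive semidefiniteness exactly when `0 ≤ 1 + (1 - 3x / 2) (C⁻¹)₀₀ / (3x)`. Partial fractions
invert `C` explicitly, and `(C⁻¹)₀₀ = 2 ∏_{i=1}^k ((i + 2) / i)² = (k + 1)² (k + 2)² / 2`.
-/

section RankOne

variable {ι : Type*} [Fintype ι]

lemma posSemidef_iff_of_isSymm {M : Matrix ι ι ℝ} (hM : M.IsSymm) :
    M.PosSemidef ↔ ∀ y : ι → ℝ, 0 ≤ y ⬝ᵥ (M *ᵥ y) := by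
  simp [posSemidef_iff_dotProduct_mulVec, IsHermitian, conjTranspose_eq_transpose_of_trivial, hM.eq]

lemma sq_dotProduct_mulVec_le {M : Matrix ι ι ℝ} (hM : M.PosSemidef) (y z : ι → ℝ) :
    (y ⬝ᵥ (M *ᵥ z)) ^ 2 ≤ (y ⬝ᵥ (M *ᵥ y)) * (z ⬝ᵥ (M *ᵥ z)) := by
  classical
  have hsymm : (toBilin' M).IsSymm :=
    isSymm_toBilin'_iff_isSymm.mpr <| isHermitian_iff_isSymm.mp hM.isHermitian
  have hnonneg (u : ι → ℝ) : 0 ≤ toBilin' M u u := by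
    simpa only [toBilin'_apply', star_trivial] using hM.dotProduct_mulVec_nonneg u
  simpa only [toBilin'_apply'] using
    LinearMap.BilinForm.apply_sq_le_of_symm (toBilin' M) hnonneg
      (LinearMap.BilinForm.isSymm_iff.mp hsymm) y z

lemma posSemidef_add_smul_vecMulVec_iff {M : Matrix ι ι ℝ} (hM : M.PosSemidef) {c v : ι → ℝ}
    (hc : M *ᵥ c = v) (t : ℝ) :
    (M + t • vecMulVec v v).PosSemidef ↔ 0 ≤ 1 + t * (c ⬝ᵥ v) := by
  have hnonneg (y : ι → ℝ) : 0 ≤ y ⬝ᵥ (M *ᵥ y) := hM.dotProduct_mulVec_nonneg y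
  have hsymm : (M + t • vecMulVec v v).IsSymm :=
    (isHermitian_iff_isSymm.mp hM.isHermitian).add (IsSymm.smul (transpose_vecMulVec v v) t)
  have hform (y : ι → ℝ) :
      y ⬝ᵥ ((M + t • vecMulVec v v) *ᵥ y) = y ⬝ᵥ (M *ᵥ y) + t * (y ⬝ᵥ v) ^ 2 := by
    rw [add_mulVec, dotProduct_add, smul_mulVec, dotProduct_smul, vecMulVec_mulVec, op_smul_eq_smul,
      dotProduct_smul, dotProduct_comm v y, smul_eq_mul, smul_eq_mul, sq]
  rw [posSemidef_iff_of_isSymm hsymm]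
  simp only [hform]
  constructor
  · intro h
    have hcv : 0 ≤ c ⬝ᵥ v := hc ▸ hnonneg c
    rcases hcv.eq_or_lt with hzero | hpos
    · simp [← hzero]
    · refine nonneg_of_mul_nonneg_right ?_ hpos
      calc 0 ≤ c ⬝ᵥ (M *ᵥ c) + t * (c ⬝ᵥ v) ^ 2 := h c
        _ = c ⬝ᵥ v * (1 + t * (c ⬝ᵥ v)) := by rw [hc]; ring
  · intro h y
    have hCS : (y ⬝ᵥ v) ^ 2 ≤ (y ⬝ᵥ (M *ᵥ y)) * (c ⬝ᵥ v) := hc ▸ sq_dotProduct_mulVec_le hM y c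
    rcases le_total 0 t with ht | ht
    · have := hnonneg y
      positivity
    · calc 0 ≤ y ⬝ᵥ (M *ᵥ y) * (1 + t * (c ⬝ᵥ v)) := mul_nonneg (hnonneg y) h
        _ = y ⬝ᵥ (M *ᵥ y) + t * (y ⬝ᵥ (M *ᵥ y) * (c ⬝ᵥ v)) := by ring
        _ ≤ y ⬝ᵥ (M *ᵥ y) + t * (y ⬝ᵥ v) ^ 2 := by
          gcongr _ + ?_
          exact mul_le_mul_of_nonpos_left hCS ht

lemma posSemidef_add_single_iff [DecidableEq ι] {M N : Matrix ι ι ℝ} (hM : M.PosSemidef)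
    (hMN : M * N = 1) (i : ι) (t : ℝ) :
    (M + single i i t).PosSemidef ↔ 0 ≤ 1 + t * N i i := by
  have hcol : M *ᵥ N.col i = Pi.single i 1 := by
    rw [← mulVec_single_one, mulVec_mulVec, hMN, one_mulVec]
  have hsingle : single i i t = t • vecMulVec (Pi.single i 1) (Pi.single i 1) := by
    rw [← single_eq_single_vecMulVec_single, smul_single, smul_eq_mul, mul_one]
  rw [hsingle, posSemidef_add_smul_vecMulVec_iff hM hcol, dotProduct_single_one, col_apply]

end RankOne

section Cauchy

variable {ι K : Type*} [Field K]

/-- The Cauchy matrix of two families `a` and `b`. Where `a i + b j = 0` the entry is `0`. -/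
def cauchyMatrix {κ : Type*} (a : ι → K) (b : κ → K) : Matrix ι κ K :=
  Matrix.of fun i j ↦ (a i + b j)⁻¹

lemma dotProduct_cauchyMatrix_self_mulVec_eq_integral [Fintype ι] {a : ι → ℝ}
    (ha : ∀ i, 0 < a i) (y : ι → ℝ) :
    y ⬝ᵥ (cauchyMatrix a a *ᵥ y) =
      ∫ t in Set.Ioi (0 : ℝ), (∑ i, y i * Real.exp (-a i * t)) ^ 2 := by
  have hneg (i j : ι) : -(a i + a j) < 0 := neg_lt_zero.mpr (add_pos (ha i) (ha j))
  have hsq (t : ℝ) : (∑ i, y i * Real.exp (-a i * t)) ^ 2 =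
      ∑ i, ∑ j, y i * y j * Real.exp (-(a i + a j) * t) := by
    simp only [sq, sum_mul_sum, neg_add, add_mul, Real.exp_add]
    exact sum_congr rfl fun i _ ↦ sum_congr rfl fun j _ ↦ by ring
  have hint (i j : ι) : MeasureTheory.IntegrableOn
      (fun t ↦ y i * y j * Real.exp (-(a i + a j) * t)) (Set.Ioi 0) :=
    (integrableOn_exp_mul_Ioi (hneg i j) 0).const_mul _
  simp only [hsq]
  rw [MeasureTheory.integral_finsetSum _ fun i _ ↦
    MeasureTheory.integrable_finsetSum _ fun j _ ↦ hint i j]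
  simp only [dotProduct, mulVec, cauchyMatrix, of_apply, mul_sum]
  refine sum_congr rfl fun i _ ↦ ?_
  rw [MeasureTheory.integral_finsetSum _ fun j _ ↦ hint i j]
  refine sum_congr rfl fun j _ ↦ ?_
  rw [MeasureTheory.integral_const_mul, integral_exp_mul_Ioi (hneg i j), mul_zero,
    Real.exp_zero, neg_div_neg_eq, one_div]
  ring

lemma posSemidef_cauchyMatrix_self [Finite ι] {a : ι → ℝ} (ha : ∀ i, 0 < a i) :
    (cauchyMatrix a a).PosSemidef := by
  cases nonempty_fintype ι
  have hsymm : (cauchyMatrix a a).IsSymm :=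
    Matrix.ext fun i j ↦ congrArg (·⁻¹) (add_comm (a j) (a i))
  refine (posSemidef_iff_of_isSymm hsymm).mpr fun y ↦ ?_
  rw [dotProduct_cauchyMatrix_self_mulVec_eq_integral ha]
  exact MeasureTheory.integral_nonneg fun t ↦ sq_nonneg _

variable [Fintype ι] [DecidableEq ι]

lemma sum_inv_add_mul_nodalWeight_mul_eval {b : ι → K} (hb : b.Injective) {P : Polynomial K}
    (hP : P.degree < Fintype.card ι) {x : K} (hx : ∀ j, x + b j ≠ 0) :
    ∑ j, (x + b j)⁻¹ * (Lagrange.nodalWeight univ (-b) j * P.eval (-b j)) =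
      P.eval x / ∏ j, (x + b j) := by
  have hinterp := Lagrange.eq_interpolate (v := -b) (neg_injective.comp hb).injOn
    (by rwa [card_univ])
  have heval := congrArg (Polynomial.eval x) hinterp
  rw [Lagrange.eval_interpolate_not_at_node _ fun j _ h ↦ hx j (by simp [h]),
    Lagrange.eval_nodal] at heval
  simp only [Pi.neg_apply, sub_neg_eq_add] at heval
  rw [heval, mul_div_cancel_left₀ _ (prod_ne_zero_iff.mpr fun j _ ↦ hx j)]
  exact sum_congr rfl fun j _ ↦ by ring

/-- The inverse of `cauchyMatrix a b`, for injective `a` and `b` such that no `a i + b j` vanishes.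
Column `i` consists of the coefficients in the partial fraction expansion of
`L / ∏ j, (X + b j)`, where `L` is the Lagrange basis polynomial of the node `a i`, scaled by the
value of the denominator at that node. -/
def cauchyInverse (a b : ι → K) : Matrix ι ι K :=
  Matrix.of fun j i ↦ (∏ l, (a i + b l)) *
    (Lagrange.nodalWeight univ (-b) j * (Lagrange.basis univ a i).eval (-b j))

lemma cauchyMatrix_mul_cauchyInverse {a b : ι → K} (ha : a.Injective) (hb : b.Injective)
    (hab : ∀ i j, a i + b j ≠ 0) : cauchyMatrix a b * cauchyInverse a b = 1 := by
  ext l i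
  have hdeg : (Lagrange.basis univ a i).degree < Fintype.card ι := by
    rw [Lagrange.degree_basis ha.injOn (mem_univ i), card_univ]
    exact_mod_cast Nat.sub_lt (Fintype.card_pos_iff.mpr ⟨i⟩) one_pos
  calc (cauchyMatrix a b * cauchyInverse a b) l i
      = (∏ j, (a i + b j)) * ∑ j, (a l + b j)⁻¹ *
          (Lagrange.nodalWeight univ (-b) j * (Lagrange.basis univ a i).eval (-b j)) := by
        simp only [mul_apply, cauchyMatrix, cauchyInverse, of_apply, mul_sum]
        exact sum_congr rfl fun j _ ↦ by ring
    _ = (∏ j, (a i + b j)) * ((Lagrange.basis univ a i).eval (a l) / ∏ j, (a l + b j)) := by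
        rw [sum_inv_add_mul_nodalWeight_mul_eval hb hdeg (hab l)]
    _ = (1 : Matrix ι ι K) l i := by
        rcases eq_or_ne l i with rfl | hli
        · rw [Lagrange.eval_basis_self ha.injOn (mem_univ l), one_apply_eq,
            mul_one_div_cancel (prod_ne_zero_iff.mpr fun j _ ↦ hab l j)]
        · rw [Lagrange.eval_basis_of_ne hli.symm (mem_univ l), one_apply_ne hli, zero_div, mul_zero]

lemma cauchyInverse_self_apply_self (a : ι → K) (i : ι) :
    cauchyInverse a a i i = 2 * a i * ∏ j ∈ univ.erase i, ((a i + a j) / (a i - a j)) ^ 2 := by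
  rw [cauchyInverse, of_apply, ← mul_prod_erase univ _ (mem_univ i), ← two_mul, mul_assoc,
    Lagrange.nodalWeight, Lagrange.basis, Polynomial.eval_prod, ← prod_mul_distrib,
    ← prod_mul_distrib]
  congr 1
  refine prod_congr rfl fun j _ ↦ ?_
  have hneg : (-a) i - (-a) j = -(a i - a j) := by simp only [Pi.neg_apply]; ring
  simp only [hneg, Lagrange.basisDivisor, Polynomial.eval_mul, Polynomial.eval_C,
    Polynomial.eval_sub, Polynomial.eval_X, inv_neg]
  ring

end Cauchy

section Hankel

/-- The nodes `1, 2, …, k + 1`, whose Cauchy matrix has entries `1 / (i + j + 2)`. -/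
def hankelNode (k : ℕ) (i : Fin (k + 1)) : ℝ := i + 1

lemma hankelNode_pos (k : ℕ) (i : Fin (k + 1)) : 0 < hankelNode k i := by
  unfold hankelNode
  positivity

lemma hankelNode_injective (k : ℕ) : (hankelNode k).Injective := fun i j h ↦
  Fin.ext <| by simpa [hankelNode] using h

lemma prod_range_add_three_div_add_one (k : ℕ) :
    ∏ i ∈ range k, ((i : ℝ) + 3) / (i + 1) = (k + 1) * (k + 2) / 2 := by
  induction k with
  | zero => norm_num
  | succ n ih =>
    rw [prod_range_succ, ih]
    push_cast
    field_simp
    ring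

lemma cauchyInverse_hankelNode_zero_zero (k : ℕ) :
    cauchyInverse (hankelNode k) (hankelNode k) 0 0 = ((k : ℝ) + 1) ^ 2 * (k + 2) ^ 2 / 2 := by
  have hfactor (i : Fin k) : ((hankelNode k 0 + hankelNode k i.succ) /
      (hankelNode k 0 - hankelNode k i.succ)) ^ 2 = (((i : ℝ) + 3) / (i + 1)) ^ 2 := by
    simp only [hankelNode, Fin.val_zero, Fin.val_succ]
    push_cast
    rw [← neg_sq, ← div_neg]
    ring_nf
  rw [cauchyInverse_self_apply_self, ← compl_singleton, ← Fin.image_succ_univ,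
    prod_image (Fin.succ_injective k).injOn]
  simp only [hfactor]
  rw [prod_pow, Fin.prod_univ_eq_prod_range (fun i ↦ ((i : ℝ) + 3) / (i + 1)),
    prod_range_add_three_div_add_one]
  simp only [hankelNode, Fin.val_zero]
  push_cast
  ring

lemma momentX_zero (x : ℝ) : momentX x 0 = 1 := prod_range_zero _

lemma momentX_succ {x : ℝ} (hx : 0 ≤ x) (m : ℕ) : momentX x (m + 1) = 3 * x / (m + 3) := by
  induction m with
  | zero => simp [momentX, alphaX, Real.sq_sqrt hx]
  | succ n ih =>
    rw [momentX, prod_range_succ, ← momentX, ih, alphaX, if_neg n.succ_ne_zero,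
      Real.sq_sqrt (by positivity)]
    push_cast
    field_simp
    ring

lemma of_momentX_eq_smul_cauchyMatrix_add_single {x : ℝ} (hx : 0 ≤ x) (k : ℕ) :
    (Matrix.of fun i j : Fin (k + 1) ↦ momentX x (i.1 + j.1)) =
      (3 * x) • cauchyMatrix (hankelNode k) (hankelNode k) + single 0 0 (1 - 3 * x / 2) := by
  ext i j
  simp only [of_apply, Matrix.add_apply, Matrix.smul_apply, smul_eq_mul, cauchyMatrix, hankelNode]
  by_cases h : 0 = i ∧ 0 = j
  · obtain ⟨rfl, rfl⟩ := h
    simp only [single_apply_same, Fin.val_zero, add_zero, momentX_zero]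
    push_cast
    ring
  · obtain ⟨m, hm⟩ : ∃ m, i.1 + j.1 = m + 1 :=
      Nat.exists_eq_succ_of_ne_zero fun h0 ↦
        h ((Nat.add_eq_zero_iff.mp h0).imp (Fin.ext ·.symm) (Fin.ext ·.symm))
    have hcast : (i : ℝ) + j = m + 1 := by exact_mod_cast hm
    have hnode : (i : ℝ) + 1 + (j + 1) = m + 3 := by linarith
    rw [single_apply_of_ne (h := h), hm, momentX_succ hx, hnode, add_zero, div_eq_mul_inv]

lemma posSemidef_of_momentX_iff {x : ℝ} (hx : 0 < x) (k : ℕ) :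
    (Matrix.of fun i j : Fin (k + 1) ↦ momentX x (i.1 + j.1)).PosSemidef ↔
      0 ≤ 1 + (1 - 3 * x / 2) * ((3 * x)⁻¹ * (((k : ℝ) + 1) ^ 2 * (k + 2) ^ 2 / 2)) := by
  set C := cauchyMatrix (hankelNode k) (hankelNode k)
  have hpsd : ((3 * x) • C).PosSemidef :=
    (posSemidef_cauchyMatrix_self (hankelNode_pos k)).smul (by positivity)
  have hinv : (3 * x) • C * (3 * x)⁻¹ • cauchyInverse (hankelNode k) (hankelNode k) = 1 := by
    rw [smul_mul_smul_comm, mul_inv_cancel₀ (by positivity), one_smul,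
      cauchyMatrix_mul_cauchyInverse (hankelNode_injective k) (hankelNode_injective k)
        fun i j ↦ (add_pos (hankelNode_pos k i) (hankelNode_pos k j)).ne']
  rw [of_momentX_eq_smul_cauchyMatrix_add_single hx.le, posSemidef_add_single_iff hpsd hinv,
    Matrix.smul_apply, cauchyInverse_hankelNode_zero_zero, smul_eq_mul]

end Hankel

/-- The `(k+1)×(k+1)` Hankel moment matrix `(γ_{i+j})_{0 ≤ i,j ≤ k}` is positive
semidefinite iff `0 < x ≤ 2(k+1)²(k+2)²/(3k(k+3)(k²+3k+4))`. -/
theorem hankel_posSemidef_iff (x : ℝ) (hx : 0 < x) (k : ℕ) (hk : 1 ≤ k) :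
    (∀ y : Fin (k + 1) → ℝ,
        0 ≤ y ⬝ᵥ ((Matrix.of fun i j : Fin (k + 1) => momentX x (i.1 + j.1)) *ᵥ y)) ↔
      (0 < x ∧ x ≤ 2 * ((k : ℝ) + 1) ^ 2 * ((k : ℝ) + 2) ^ 2 /
        (3 * (k : ℝ) * ((k : ℝ) + 3) * ((k : ℝ) ^ 2 + 3 * (k : ℝ) + 4))) := by
  have hsymm : (Matrix.of fun i j : Fin (k + 1) ↦ momentX x (i.1 + j.1)).IsSymm :=
    Matrix.ext fun i j ↦ congrArg (momentX x) (add_comm j.1 i.1)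
  have : (0 : ℝ) < k := by exact_mod_cast hk
  have hclear : 1 + (1 - 3 * x / 2) * ((3 * x)⁻¹ * (((k : ℝ) + 1) ^ 2 * (k + 2) ^ 2 / 2)) =
      (2 * ((k : ℝ) + 1) ^ 2 * (k + 2) ^ 2 -
        x * (3 * k * (k + 3) * (k ^ 2 + 3 * k + 4))) / (12 * x) := by
    field_simp
    ring
  rw [← posSemidef_iff_of_isSymm hsymm, posSemidef_of_momentX_iff hx, and_iff_right hx, hclear,
    le_div_iff₀ (by positivity), le_div_iff₀ (by positivity), zero_mul, sub_nonneg]
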